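/- Let (h_n, u_n, f_n) be a contradiction sequence. Then ‖a^{1/2}·u_n‖_{L²} + ‖a^{1/2}·h_n∇u_n‖_{L²} + ‖a^{1/2}·h_n²Δu_n‖_{L²} = o(h_n) as n → ∞. -/

import Mathlib

open MeasureTheory Complex ComplexConjugate

noncomputable section

/-- Partial derivative `∂u/∂xᵢ` of a complex-valued function on `ℝ^d`. -/
def pd {d : ℕ} (i : Fin d) (u : EuclideanSpace ℝ (Fin d) → ℂ)
    (x : EuclideanSpace ℝ (Fin d)) : ℂ :=
  fderiv ℝ u x (EuclideanSpace.single i (1 : ℝ))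

/-- Laplacian `Δu = ∑ᵢ ∂²u/∂xᵢ²` of a complex-valued function on `ℝ^d`. -/
def lap {d : ℕ} (u : EuclideanSpace ℝ (Fin d) → ℂ)
    (x : EuclideanSpace ℝ (Fin d)) : ℂ :=
  ∑ i : Fin d, pd i (pd i u) x

/-- The semiclassical Kelvin–Voigt operator
`P_h u = -h²Δu - u - i h (∇a·∇u + a Δu)`. -/
def Ph {d : ℕ} (h : ℝ) (a : EuclideanSpace ℝ (Fin d) → ℝ)
    (u : EuclideanSpace ℝ (Fin d) → ℂ) (x : EuclideanSpace ℝ (Fin d)) : ℂ :=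
  -(h ^ 2 : ℂ) * lap u x - u x -
    Complex.I * (h : ℂ) *
      ((∑ i : Fin d, (fderiv ℝ a x (EuclideanSpace.single i (1 : ℝ)) : ℂ) * pd i u x) +
        (a x : ℂ) * lap u x)

open Filter Asymptotics

section Helpers

variable {d : ℕ}

theorem integrable_of_eq_zero_off_tsupport {F : Type*} [NormedAddCommGroup F]
    {u : EuclideanSpace ℝ (Fin d) → ℂ} (hus : HasCompactSupport u)
    {g : EuclideanSpace ℝ (Fin d) → F} (hg : Continuous g) (hz : ∀ x ∉ tsupport u, g x = 0) :
    Integrable g :=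
  hg.integrable_of_hasCompactSupport (.intro hus hz)

theorem pd_eq_zero_of_notMem_tsupport (i : Fin d) {u : EuclideanSpace ℝ (Fin d) → ℂ}
    {x : EuclideanSpace ℝ (Fin d)} (hx : x ∉ tsupport u) :
    pd i u x = 0 := by
  simp [pd, image_eq_zero_of_notMem_tsupport (fun hx' => hx (tsupport_fderiv_subset ℝ hx'))]

theorem tsupport_pd_subset (i : Fin d) (u : EuclideanSpace ℝ (Fin d) → ℂ) :
    tsupport (pd i u) ⊆ tsupport u :=
  closure_minimal (fun _ hx => by_contra fun hx' => hx (pd_eq_zero_of_notMem_tsupport i hx'))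
    (isClosed_tsupport u)

theorem lap_eq_zero_of_notMem_tsupport {u : EuclideanSpace ℝ (Fin d) → ℂ}
    {x : EuclideanSpace ℝ (Fin d)} (hx : x ∉ tsupport u) :
    lap u x = 0 :=
  Finset.sum_eq_zero fun i _ =>
    pd_eq_zero_of_notMem_tsupport i fun hx' => hx (tsupport_pd_subset i u hx')

theorem Ph_eq_zero_of_notMem_tsupport (h : ℝ) (a : EuclideanSpace ℝ (Fin d) → ℝ)
    {u : EuclideanSpace ℝ (Fin d) → ℂ} {x : EuclideanSpace ℝ (Fin d)}
    (hx : x ∉ tsupport u) : Ph h a u x = 0 := by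
  simp [Ph, lap_eq_zero_of_notMem_tsupport hx, pd_eq_zero_of_notMem_tsupport _ hx,
    image_eq_zero_of_notMem_tsupport hx]

theorem contDiff_pd {u : EuclideanSpace ℝ (Fin d) → ℂ} (hu : ContDiff ℝ 2 u) (i : Fin d) :
    ContDiff ℝ 1 (pd i u) :=
  (hu.fderiv_right (m := 1) (by norm_num)).clm_apply contDiff_const

theorem continuous_pd {u : EuclideanSpace ℝ (Fin d) → ℂ} (hu : ContDiff ℝ 1 u) (i : Fin d) :
    Continuous (pd i u) :=
  (hu.continuous_fderiv one_ne_zero).clm_apply continuous_const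

theorem continuous_lap {u : EuclideanSpace ℝ (Fin d) → ℂ} (hu : ContDiff ℝ 2 u) :
    Continuous (lap u) :=
  continuous_finsetSum _ fun i _ => continuous_pd (contDiff_pd hu i) i

theorem continuous_Ph (h : ℝ) {a : EuclideanSpace ℝ (Fin d) → ℝ} (ha : ContDiff ℝ 1 a)
    {u : EuclideanSpace ℝ (Fin d) → ℂ}
    (hu : ContDiff ℝ 2 u) : Continuous (Ph h a u) := by
  have h1 := continuous_lap hu
  have h2 := fun i => continuous_pd (hu.of_le (by norm_num)) i
  have h3 := hu.continuous
  have h4 := ha.continuous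
  have h5 : ∀ i : Fin d, Continuous fun x => fderiv ℝ a x (EuclideanSpace.single i (1 : ℝ)) :=
    fun i => (ha.continuous_fderiv one_ne_zero).clm_apply continuous_const
  unfold Ph
  fun_prop

theorem integral_mul_le_sqrt_mul_sqrt {f g : EuclideanSpace ℝ (Fin d) → ℝ} (hf : Continuous f)
    (hg : Continuous g)
    (hf0 : ∀ x, 0 ≤ f x) (hg0 : ∀ x, 0 ≤ g x) (hfs : HasCompactSupport f)
    (hgs : HasCompactSupport g) :
    ∫ x, f x * g x ≤ √(∫ x, f x ^ 2) * √(∫ x, g x ^ 2) := by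
  have key := integral_mul_le_Lp_mul_Lq_of_nonneg (μ := volume) Real.HolderConjugate.two_two
    (.of_forall hf0) (.of_forall hg0) (hf.memLp_of_hasCompactSupport hfs)
    (hg.memLp_of_hasCompactSupport hgs)
  simpa only [Real.sqrt_eq_rpow, Real.rpow_two] using key

/-- Integration by parts for `∫ (P_h u) w`, in weak form. -/
theorem integral_weak_Ph {h : ℝ} {a : EuclideanSpace ℝ (Fin d) → ℝ} (ha : ContDiff ℝ 1 a)
    {u w : EuclideanSpace ℝ (Fin d) → ℂ}
    (hu : ContDiff ℝ 2 u) (hus : HasCompactSupport u) (hw : ContDiff ℝ 1 w) :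
    ∫ x, ((∑ i, ((h : ℂ) ^ 2 + I * h * a x) * pd i u x * pd i w x) - u x * w x
      - Ph h a u x * w x) = 0 := by
  set V : Fin d → EuclideanSpace ℝ (Fin d) → ℂ := fun i x =>
      ((h : ℂ) ^ 2 + I * h * a x) * pd i u x with hV
  have hc : ContDiff ℝ 1 fun x => (h : ℂ) ^ 2 + I * h * a x :=
    contDiff_const.add (contDiff_const.mul (ofRealCLM.contDiff.comp ha))
  have hV1 : ∀ i, ContDiff ℝ 1 (V i) := fun i => hc.mul (contDiff_pd hu i)
  have hVs : ∀ i, tsupport (V i) ⊆ tsupport u := fun i =>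
    (tsupport_mul_subset_right).trans (tsupport_pd_subset i u)
  have hVz : ∀ i x, x ∉ tsupport u → V i x = 0 := fun i x hx =>
    image_eq_zero_of_notMem_tsupport fun hx' => hx (hVs i hx')
  have hVz' : ∀ i x, x ∉ tsupport u → pd i (V i) x = 0 := fun i x hx =>
    pd_eq_zero_of_notMem_tsupport i fun hx' => hx (hVs i hx')
  have hpdV : ∀ i x, pd i (V i) x =
      I * h * (fderiv ℝ a x (EuclideanSpace.single i (1 : ℝ)) : ℂ) * pd i u x
        + ((h : ℂ) ^ 2 + I * h * a x) * pd i (pd i u) x := by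
    intro i x
    have h1 : HasFDerivAt (fun x => (h : ℂ) ^ 2 + I * h * a x)
        ((I * h) • (ofRealCLM.comp (fderiv ℝ a x))) x :=
      ((ofRealCLM.hasFDerivAt.comp x
        (ha.differentiable one_ne_zero x).hasFDerivAt).const_mul (I * (h : ℂ))).const_add _
    have h2 := ((contDiff_pd hu i).differentiable one_ne_zero x).hasFDerivAt
    have h3 := (h1.mul h2).fderiv
    have h4 : pd i (V i) x = _ := congrArg (· (EuclideanSpace.single i (1 : ℝ))) h3
    rw [h4]
    simp [pd]
    ring
  have hi1 : ∀ i, Integrable fun x => V i x * pd i w x := fun i =>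
    integrable_of_eq_zero_off_tsupport hus ((hV1 i).continuous.mul (continuous_pd hw i))
      fun x hx => by simp [hVz i x hx]
  have hi2 : ∀ i, Integrable fun x => pd i (V i) x * w x := fun i =>
    integrable_of_eq_zero_off_tsupport hus ((continuous_pd (hV1 i) i).mul hw.continuous)
      fun x hx => by simp [hVz' i x hx]
  have hi3 : ∀ i, Integrable fun x => V i x * w x := fun i =>
    integrable_of_eq_zero_off_tsupport hus ((hV1 i).continuous.mul hw.continuous)
      fun x hx => by simp [hVz i x hx]
  have hibp : ∀ i, ∫ x, (V i x * pd i w x + pd i (V i) x * w x) = 0 := by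
    intro i
    rw [integral_add (hi1 i) (hi2 i)]
    have : ∫ x, V i x * pd i w x = - ∫ x, pd i (V i) x * w x :=
      integral_mul_fderiv_eq_neg_fderiv_mul_of_integrable (hi2 i) (hi1 i) (hi3 i)
        (fun x _ => (hV1 i).differentiable one_ne_zero x)
        (fun x _ => hw.differentiable one_ne_zero x)
    rw [this, neg_add_cancel]
  have hsum : ∫ x, ∑ i, (V i x * pd i w x + pd i (V i) x * w x) = 0 := by
    have hi : ∀ i ∈ Finset.univ, Integrable fun x => V i x * pd i w x + pd i (V i) x * w x :=
      fun i _ => (hi1 i).add (hi2 i)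
    rw [integral_finsetSum _ hi]
    exact Finset.sum_eq_zero fun i _ => hibp i
  rw [← hsum]
  refine integral_congr_ae (.of_forall fun x => ?_)
  simp only [hpdV]
  simp only [hV, Ph, lap, Finset.sum_add_distrib, add_mul, ← Finset.sum_mul]
  simp only [mul_assoc, ← Finset.mul_sum]
  ring

theorem pd_conj {u : EuclideanSpace ℝ (Fin d) → ℂ} (hu : Differentiable ℝ u) (i : Fin d)
    (x : EuclideanSpace ℝ (Fin d)) :
    pd i (fun y => conj (u y)) x = conj (pd i u x) := by
  have := (conjCLE.toContinuousLinearMap.hasFDerivAt.comp x (hu x).hasFDerivAt).fderiv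
  exact congrArg (· (EuclideanSpace.single i (1 : ℝ))) this

theorem contDiff_conj {u : EuclideanSpace ℝ (Fin d) → ℂ} {n : WithTop ℕ∞} (hu : ContDiff ℝ n u) :
    ContDiff ℝ n fun y => conj (u y) :=
  conjCLE.contDiff.comp hu

theorem pd_ofReal_mul {a : EuclideanSpace ℝ (Fin d) → ℝ} {w : EuclideanSpace ℝ (Fin d) → ℂ}
    (ha : Differentiable ℝ a)
    (hw : Differentiable ℝ w) (i : Fin d) (x : EuclideanSpace ℝ (Fin d)) :
    pd i (fun y => (a y : ℂ) * w y) x =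
      (fderiv ℝ a x (EuclideanSpace.single i (1 : ℝ)) : ℂ) * w x + a x * pd i w x := by
  have h1 := (ofRealCLM.hasFDerivAt.comp x (ha x).hasFDerivAt).mul (hw x).hasFDerivAt
  have h2 : pd i (fun y => (a y : ℂ) * w y) x = _ :=
    congrArg (· (EuclideanSpace.single i (1 : ℝ))) h1.fderiv
  rw [h2]
  simp [pd]
  ring

theorem norm_sum_fderiv_mul_le (a : EuclideanSpace ℝ (Fin d) → ℝ) (x : EuclideanSpace ℝ (Fin d))
    (z : Fin d → ℂ) :
    ‖∑ i, (fderiv ℝ a x (EuclideanSpace.single i (1 : ℝ)) : ℂ) * z i‖ ≤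
      ‖gradient a x‖ * √(∑ i, ‖z i‖ ^ 2) := by
  have hg : ‖gradient a x‖ = √(∑ i, ‖fderiv ℝ a x (EuclideanSpace.single i (1 : ℝ))‖ ^ 2) := by
    rw [EuclideanSpace.norm_eq]
    congr 1
    refine Finset.sum_congr rfl fun i _ => ?_
    rw [← inner_gradient_left, EuclideanSpace.inner_single_right]
    simp
  rw [hg]
  refine (norm_sum_le _ _).trans ?_
  simp only [norm_mul, norm_real]
  exact Real.sum_mul_le_sqrt_mul_sqrt _ _ _

variable {h K M : ℝ} {a : EuclideanSpace ℝ (Fin d) → ℝ} {u : EuclideanSpace ℝ (Fin d) → ℂ}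

theorem continuous_sum_norm_pd_sq (hu : ContDiff ℝ 1 u) :
    Continuous fun x => ∑ i, ‖pd i u x‖ ^ 2 :=
  continuous_finsetSum _ fun i _ => (continuous_pd hu i).norm.pow 2

theorem sum_norm_pd_sq_nonneg (u : EuclideanSpace ℝ (Fin d) → ℂ) (x : EuclideanSpace ℝ (Fin d)) :
    0 ≤ ∑ i, ‖pd i u x‖ ^ 2 :=
  Finset.sum_nonneg fun _ _ => sq_nonneg _

/-- Pairing `P_h u` with `u` and taking imaginary parts bounds the damped gradient. -/
theorem mul_integral_damped_gradient_le (ha : ContDiff ℝ 1 a) (hu : ContDiff ℝ 2 u)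
    (hus : HasCompactSupport u) (hnorm : ∫ x, ‖u x‖ ^ 2 = 1) :
    h * ∫ x, a x * ∑ i, ‖pd i u x‖ ^ 2 ≤ √(∫ x, ‖Ph h a u x‖ ^ 2) := by
  have hu1 : ContDiff ℝ 1 u := hu.of_le (by norm_num)
  have hw : ContDiff ℝ 1 fun y => conj (u y) := contDiff_conj hu1
  have hweak := integral_weak_Ph (h := h) ha hu hus hw
  have hcP := continuous_Ph h ha hu
  have hc1 := continuous_sum_norm_pd_sq hu1
  have hca := ha.continuous
  have hcu := hu.continuous
  have hcw := hw.continuous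
  have hsP : HasCompactSupport fun x => ‖Ph h a u x‖ :=
    .intro hus fun x hx => by simp [Ph_eq_zero_of_notMem_tsupport h a hx]
  set W : EuclideanSpace ℝ (Fin d) → ℂ := fun x => (∑ i, ((h : ℂ) ^ 2 + I * h * a x) * pd i u x *
    pd i (fun y => conj (u y)) x) - u x * conj (u x) - Ph h a u x * conj (u x) with hW
  have hWc : Continuous W := by
    have h1 := fun i => continuous_pd hu1 i
    have h2 := fun i => continuous_pd hw i
    fun_prop
  have hWz : ∀ x ∉ tsupport u, W x = 0 := fun x hx => by
    simp [hW, pd_eq_zero_of_notMem_tsupport _ hx, Ph_eq_zero_of_notMem_tsupport h a hx,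
      image_eq_zero_of_notMem_tsupport hx]
  have hWi : Integrable W := integrable_of_eq_zero_off_tsupport hus hWc hWz
  have hIm : ∫ x, (W x).im = 0 := by
    have := imCLM.integral_comp_comm hWi
    rw [hweak] at this
    simpa using this
  have hi1 : Integrable fun x => h * (a x * ∑ i, ‖pd i u x‖ ^ 2) :=
    integrable_of_eq_zero_off_tsupport hus (by fun_prop) fun x hx => by
      simp [pd_eq_zero_of_notMem_tsupport _ hx]
  have hi2 : Integrable fun x => (W x).im :=
    integrable_of_eq_zero_off_tsupport hus (by fun_prop) fun x hx => by
      simp [hWz x hx]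
  have hi3 : Integrable fun x => ‖Ph h a u x‖ * ‖u x‖ :=
    integrable_of_eq_zero_off_tsupport hus (by fun_prop) fun x hx => by
      simp [image_eq_zero_of_notMem_tsupport hx]
  calc h * ∫ x, a x * ∑ i, ‖pd i u x‖ ^ 2
      = ∫ x, (h * (a x * ∑ i, ‖pd i u x‖ ^ 2) - (W x).im) := by
        rw [integral_sub hi1 hi2, hIm, sub_zero, integral_const_mul]
    _ ≤ ∫ x, ‖Ph h a u x‖ * ‖u x‖ := by
        refine integral_mono (hi1.sub hi2) hi3 fun x => ?_
        have hx : W x = ((h : ℂ) ^ 2 + I * h * a x) * ((∑ i, ‖pd i u x‖ ^ 2 : ℝ) : ℂ)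
            - ((‖u x‖ ^ 2 : ℝ) : ℂ) - Ph h a u x * conj (u x) := by
          simp only [hW, pd_conj (hu1.differentiable one_ne_zero), mul_assoc, mul_conj,
            normSq_eq_norm_sq, ← Finset.mul_sum, ofReal_sum]
        have him : (W x).im = h * (a x * ∑ i, ‖pd i u x‖ ^ 2) - (Ph h a u x * conj (u x)).im := by
          rw [hx, sub_im, sub_im, im_mul_ofReal, ofReal_im]
          simp [← ofReal_pow]
          ring
        have hle : (Ph h a u x * conj (u x)).im ≤ ‖Ph h a u x‖ * ‖u x‖ := by
          refine (im_le_norm _).trans ?_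
          rw [norm_mul, RCLike.norm_conj]
        change h * (a x * ∑ i, ‖pd i u x‖ ^ 2) - (W x).im ≤ ‖Ph h a u x‖ * ‖u x‖
        linarith
    _ ≤ √(∫ x, ‖Ph h a u x‖ ^ 2) * √(∫ x, ‖u x‖ ^ 2) :=
        integral_mul_le_sqrt_mul_sqrt hcP.norm hcu.norm (fun _ => norm_nonneg _)
          (fun _ => norm_nonneg _) hsP hus.norm
    _ = √(∫ x, ‖Ph h a u x‖ ^ 2) := by rw [hnorm, Real.sqrt_one, mul_one]

/-- Pairing `P_h u` with `a u` and taking real parts bounds the damped mass. -/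
theorem integral_damped_mass_le (ha : ContDiff ℝ 1 a) (ha0 : ∀ x, 0 ≤ a x)
    (haM : ∀ x, √(a x) ≤ M) (hK : 0 ≤ K) (haK : ∀ x, ‖gradient a x‖ ≤ K * √(a x))
    (hh : 0 < h) (hu : ContDiff ℝ 2 u) (hus : HasCompactSupport u)
    (hnorm : ∫ x, ‖u x‖ ^ 2 = 1) :
    ∫ x, a x * ‖u x‖ ^ 2 ≤ h ^ 2 * (∫ x, a x * ∑ i, ‖pd i u x‖ ^ 2)
      + h ^ 2 * K * √(∫ x, a x * ∑ i, ‖pd i u x‖ ^ 2)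
      + h * K * M * (√(∫ x, a x * ∑ i, ‖pd i u x‖ ^ 2) * √(∫ x, a x * ‖u x‖ ^ 2))
      + M * (√(∫ x, ‖Ph h a u x‖ ^ 2) * √(∫ x, a x * ‖u x‖ ^ 2)) := by
  have hM : 0 ≤ M := (Real.sqrt_nonneg _).trans (haM 0)
  have hu1 : ContDiff ℝ 1 u := hu.of_le (by norm_num)
  have hw0 : ContDiff ℝ 1 fun y => conj (u y) := contDiff_conj hu1
  have hw : ContDiff ℝ 1 fun y => (a y : ℂ) * conj (u y) :=
    (ofRealCLM.contDiff.comp ha).mul hw0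
  have hweak := integral_weak_Ph (h := h) ha hu hus hw
  have hcP := continuous_Ph h ha hu
  have hc1 := continuous_sum_norm_pd_sq hu1
  have hca := ha.continuous
  have hcu := hu.continuous
  have hcw := hw.continuous
  set W : EuclideanSpace ℝ (Fin d) → ℂ := fun x => (∑ i, ((h : ℂ) ^ 2 + I * h * a x) * pd i u x *
    pd i (fun y => (a y : ℂ) * conj (u y)) x) - u x * (a x * conj (u x))
      - Ph h a u x * (a x * conj (u x)) with hW
  have hWc : Continuous W := by
    have h1 := fun i => continuous_pd hu1 i
    have h2 := fun i => continuous_pd hw i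
    fun_prop
  have hWz : ∀ x ∉ tsupport u, W x = 0 := fun x hx => by
    simp [hW, pd_eq_zero_of_notMem_tsupport _ hx, Ph_eq_zero_of_notMem_tsupport h a hx,
      image_eq_zero_of_notMem_tsupport hx]
  have hWi : Integrable W := integrable_of_eq_zero_off_tsupport hus hWc hWz
  have hRe : ∫ x, (W x).re = 0 := by
    have := reCLM.integral_comp_comm hWi
    rw [hweak] at this
    simpa using this
  set G : EuclideanSpace ℝ (Fin d) → ℝ := fun x => √(a x) * √(∑ i, ‖pd i u x‖ ^ 2) with hG
  set U : EuclideanSpace ℝ (Fin d) → ℝ := fun x => √(a x) * ‖u x‖ with hU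
  have hGc : Continuous G := by fun_prop
  have hUc : Continuous U := by fun_prop
  have hGz : ∀ x ∉ tsupport u, G x = 0 := fun x hx => by
    simp [hG, pd_eq_zero_of_notMem_tsupport _ hx]
  have hUz : ∀ x ∉ tsupport u, U x = 0 := fun x hx => by
    simp [hU, image_eq_zero_of_notMem_tsupport hx]
  have hG0 : ∀ x, 0 ≤ G x := fun x => by positivity
  have hU0 : ∀ x, 0 ≤ U x := fun x => by positivity
  have hGsq : ∀ x, G x ^ 2 = a x * ∑ i, ‖pd i u x‖ ^ 2 := fun x => by
    simp only [hG, mul_pow, Real.sq_sqrt (ha0 x), Real.sq_sqrt (sum_norm_pd_sq_nonneg u x)]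
  have hUsq : ∀ x, U x ^ 2 = a x * ‖u x‖ ^ 2 := fun x => by
    simp only [hU, mul_pow, Real.sq_sqrt (ha0 x)]
  simp only [← hGsq, ← hUsq]
  have hi1 : Integrable fun x => U x ^ 2 :=
    integrable_of_eq_zero_off_tsupport hus (by fun_prop) fun x hx => by
      simp [hUz x hx]
  have hi2 : Integrable fun x => (W x).re :=
    integrable_of_eq_zero_off_tsupport hus (by fun_prop) fun x hx => by
      simp [hWz x hx]
  have hi3 : Integrable fun x => h ^ 2 * G x ^ 2 :=
    integrable_of_eq_zero_off_tsupport hus (by fun_prop) fun x hx => by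
      simp [hGz x hx]
  have hi4 : Integrable fun x => h ^ 2 * K * (G x * ‖u x‖) :=
    integrable_of_eq_zero_off_tsupport hus (by fun_prop) fun x hx => by
      simp [hGz x hx]
  have hi5 : Integrable fun x => h * K * M * (G x * U x) :=
    integrable_of_eq_zero_off_tsupport hus (by fun_prop) fun x hx => by
      simp [hGz x hx]
  have hi6 : Integrable fun x => M * (‖Ph h a u x‖ * U x) :=
    integrable_of_eq_zero_off_tsupport hus (by fun_prop) fun x hx => by
      simp [hUz x hx]
  have hi34 : Integrable fun x => h ^ 2 * G x ^ 2 + h ^ 2 * K * (G x * ‖u x‖) := hi3.add hi4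
  have hi345 : Integrable fun x => h ^ 2 * G x ^ 2 + h ^ 2 * K * (G x * ‖u x‖)
      + h * K * M * (G x * U x) := hi34.add hi5
  have hptw : ∀ x, U x ^ 2 + (W x).re ≤ h ^ 2 * G x ^ 2 + h ^ 2 * K * (G x * ‖u x‖)
      + h * K * M * (G x * U x) + M * (‖Ph h a u x‖ * U x) := by
    intro x
    set D : ℂ := ∑ i, (fderiv ℝ a x (EuclideanSpace.single i (1 : ℝ)) : ℂ) * pd i u x with hD
    have hDle : ‖D‖ ≤ K * G x := by
      refine (norm_sum_fderiv_mul_le a x _).trans ?_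
      rw [hG, ← mul_assoc]
      exact mul_le_mul_of_nonneg_right (haK x) (Real.sqrt_nonneg _)
    have haU : a x * ‖u x‖ ≤ M * U x := by
      rw [hU, ← mul_assoc]
      refine mul_le_mul_of_nonneg_right ?_ (norm_nonneg _)
      nlinarith [Real.mul_self_sqrt (ha0 x), haM x, Real.sqrt_nonneg (a x)]
    have hx : W x = ((h : ℂ) ^ 2 + I * h * a x) * ((G x ^ 2 : ℝ) : ℂ)
        + ((h : ℂ) ^ 2 + I * h * a x) * conj (u x) * D
        - ((U x ^ 2 : ℝ) : ℂ) - Ph h a u x * (a x * conj (u x)) := by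
      have hsum : ∑ i, ((h : ℂ) ^ 2 + I * h * a x) * pd i u x *
          pd i (fun y => (a y : ℂ) * conj (u y)) x =
          ((h : ℂ) ^ 2 + I * h * a x) * ((G x ^ 2 : ℝ) : ℂ)
            + ((h : ℂ) ^ 2 + I * h * a x) * conj (u x) * D := by
        rw [hGsq, hD, ofReal_mul, ofReal_sum, Finset.mul_sum, Finset.mul_sum, Finset.mul_sum,
          ← Finset.sum_add_distrib]
        refine Finset.sum_congr rfl fun i _ => ?_
        rw [pd_ofReal_mul (ha.differentiable one_ne_zero) (hw0.differentiable one_ne_zero),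
          pd_conj (hu1.differentiable one_ne_zero), ← normSq_eq_norm_sq, ← mul_conj]
        ring
      have hmass : u x * (a x * conj (u x)) = ((U x ^ 2 : ℝ) : ℂ) := by
        rw [hUsq, ofReal_mul, ← normSq_eq_norm_sq, ← mul_conj]
        ring
      simp only [hW]
      rw [hsum, hmass]
    have hre : U x ^ 2 + (W x).re = h ^ 2 * G x ^ 2
        + (((h : ℂ) ^ 2 + I * h * a x) * conj (u x) * D).re
        - (Ph h a u x * (a x * conj (u x))).re := by
      rw [hx, sub_re, sub_re, add_re, re_mul_ofReal, ofReal_re]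
      simp [← ofReal_pow]
      ring
    have hcoef : ‖(h : ℂ) ^ 2 + I * h * a x‖ ≤ h ^ 2 + h * a x := by
      refine (norm_add_le _ _).trans_eq ?_
      simp [abs_of_pos hh, abs_of_nonneg (ha0 x)]
    have hB : (((h : ℂ) ^ 2 + I * h * a x) * conj (u x) * D).re ≤
        h ^ 2 * K * (G x * ‖u x‖) + h * K * M * (G x * U x) := by
      calc _ ≤ ‖(h : ℂ) ^ 2 + I * h * a x‖ * ‖u x‖ * ‖D‖ := by
            refine (re_le_norm _).trans_eq ?_
            rw [norm_mul, norm_mul, RCLike.norm_conj]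
        _ ≤ (h ^ 2 + h * a x) * ‖u x‖ * (K * G x) := by
            have := ha0 x
            gcongr
        _ = h ^ 2 * K * (G x * ‖u x‖) + h * K * G x * (a x * ‖u x‖) := by ring
        _ ≤ h ^ 2 * K * (G x * ‖u x‖) + h * K * G x * (M * U x) := by
            have := hG0 x
            gcongr
        _ = _ := by ring
    have hP : -(Ph h a u x * (a x * conj (u x))).re ≤ M * (‖Ph h a u x‖ * U x) := by
      calc _ ≤ ‖Ph h a u x‖ * (a x * ‖u x‖) := by
            refine (neg_le_abs _).trans ((abs_re_le_norm _).trans_eq ?_)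
            rw [norm_mul, norm_mul, RCLike.norm_conj, norm_real, Real.norm_of_nonneg (ha0 x)]
        _ ≤ ‖Ph h a u x‖ * (M * U x) := by gcongr
        _ = _ := by ring
    linarith
  have hGs : HasCompactSupport G := .intro hus hGz
  have hUs : HasCompactSupport U := .intro hus hUz
  have hsP : HasCompactSupport fun x => ‖Ph h a u x‖ :=
    .intro hus fun x hx => by simp [Ph_eq_zero_of_notMem_tsupport h a hx]
  have hGu : ∫ x, G x * ‖u x‖ ≤ √(∫ x, G x ^ 2) := by
    simpa [hnorm] using integral_mul_le_sqrt_mul_sqrt hGc hcu.norm hG0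
      (fun _ => norm_nonneg _) hGs hus.norm
  have hGU := integral_mul_le_sqrt_mul_sqrt hGc hUc hG0 hU0 hGs hUs
  have hPU := integral_mul_le_sqrt_mul_sqrt hcP.norm hUc (fun _ => norm_nonneg _) hU0 hsP hUs
  calc ∫ x, U x ^ 2 = ∫ x, (U x ^ 2 + (W x).re) := by rw [integral_add hi1 hi2, hRe, add_zero]
    _ ≤ ∫ x, (h ^ 2 * G x ^ 2 + h ^ 2 * K * (G x * ‖u x‖)
      + h * K * M * (G x * U x) + M * (‖Ph h a u x‖ * U x)) :=
        integral_mono (hi1.add hi2) (hi345.add hi6) hptw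
    _ = h ^ 2 * (∫ x, G x ^ 2) + h ^ 2 * K * (∫ x, G x * ‖u x‖)
      + h * K * M * (∫ x, G x * U x) + M * (∫ x, ‖Ph h a u x‖ * U x) := by
        rw [integral_add hi345 hi6, integral_add hi34 hi5, integral_add hi3 hi4]
        simp only [integral_const_mul]
    _ ≤ _ := by gcongr

/-- The equation `P_h u = f` bounds the damped Laplacian by the lower-order terms. -/
theorem integral_damped_lap_le (ha : ContDiff ℝ 1 a) (ha0 : ∀ x, 0 ≤ a x)
    (haM : ∀ x, √(a x) ≤ M) (haK : ∀ x, ‖gradient a x‖ ≤ K * √(a x))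
    (hh : 0 < h) (hu : ContDiff ℝ 2 u) (hus : HasCompactSupport u) :
    ∫ x, a x * ‖((h : ℝ) ^ 2 : ℂ) * lap u x‖ ^ 2 ≤ 3 * ((∫ x, a x * ‖u x‖ ^ 2)
      + M ^ 2 * (∫ x, ‖Ph h a u x‖ ^ 2)
      + (h * K * M) ^ 2 * (∫ x, a x * ∑ i, ‖pd i u x‖ ^ 2)) := by
  have hu1 : ContDiff ℝ 1 u := hu.of_le (by norm_num)
  have hcP := continuous_Ph h ha hu
  have hc1 := continuous_sum_norm_pd_sq hu1
  have hcl := continuous_lap hu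
  have hca := ha.continuous
  have hcu := hu.continuous
  have hi0 : Integrable fun x => a x * ‖((h : ℝ) ^ 2 : ℂ) * lap u x‖ ^ 2 :=
    integrable_of_eq_zero_off_tsupport hus (by fun_prop) fun x hx => by
      simp [lap_eq_zero_of_notMem_tsupport hx]
  have hi1 : Integrable fun x => a x * ‖u x‖ ^ 2 :=
    integrable_of_eq_zero_off_tsupport hus (by fun_prop) fun x hx => by
      simp [image_eq_zero_of_notMem_tsupport hx]
  have hi2 : Integrable fun x => M ^ 2 * ‖Ph h a u x‖ ^ 2 :=
    integrable_of_eq_zero_off_tsupport hus (by fun_prop) fun x hx => by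
      simp [Ph_eq_zero_of_notMem_tsupport h a hx]
  have hi3 : Integrable fun x => (h * K * M) ^ 2 * (a x * ∑ i, ‖pd i u x‖ ^ 2) :=
    integrable_of_eq_zero_off_tsupport hus (by fun_prop) fun x hx => by
      simp [pd_eq_zero_of_notMem_tsupport _ hx]
  have hi12 : Integrable fun x => a x * ‖u x‖ ^ 2 + M ^ 2 * ‖Ph h a u x‖ ^ 2 := hi1.add hi2
  rw [← integral_const_mul (M ^ 2), ← integral_const_mul ((h * K * M) ^ 2),
    ← integral_add hi1 hi2, ← integral_add hi12 hi3, ← integral_const_mul]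
  refine integral_mono hi0 ((hi12.add hi3).const_mul 3) fun x => ?_
  change a x * ‖((h : ℝ) ^ 2 : ℂ) * lap u x‖ ^ 2 ≤ 3 * (a x * ‖u x‖ ^ 2
    + M ^ 2 * ‖Ph h a u x‖ ^ 2 + (h * K * M) ^ 2 * (a x * ∑ i, ‖pd i u x‖ ^ 2))
  set D : ℂ := ∑ i, (fderiv ℝ a x (EuclideanSpace.single i (1 : ℝ)) : ℂ) * pd i u x with hD
  set S : ℝ := ∑ i, ‖pd i u x‖ ^ 2 with hS
  have hS0 : 0 ≤ S := sum_norm_pd_sq_nonneg u x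
  have hM2 : a x ≤ M ^ 2 := (Real.sqrt_le_left
    ((Real.sqrt_nonneg _).trans (haM x))).mp (haM x)
  have hDle : ‖D‖ ^ 2 ≤ K ^ 2 * (a x * S) := by
    have h1 : ‖D‖ ≤ K * √(a x) * √S := (norm_sum_fderiv_mul_le a x _).trans
      (mul_le_mul_of_nonneg_right (haK x) (Real.sqrt_nonneg _))
    calc ‖D‖ ^ 2 ≤ (K * √(a x) * √S) ^ 2 := by gcongr
      _ = K ^ 2 * (a x * S) := by
        rw [mul_pow, mul_pow, Real.sq_sqrt (ha0 x), Real.sq_sqrt hS0, mul_assoc]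
  have heq : ((h : ℂ) ^ 2 + I * h * a x) * lap u x = -(u x + Ph h a u x + I * h * D) := by
    simp only [Ph, ← hD]
    ring
  have hcoef : h ^ 2 ≤ ‖(h : ℂ) ^ 2 + I * h * a x‖ := by
    refine le_trans ?_ (re_le_norm _)
    simp [← ofReal_pow]
  have hle : ‖((h : ℝ) ^ 2 : ℂ) * lap u x‖ ≤ ‖u x‖ + ‖Ph h a u x‖ + h * ‖D‖ := by
    calc ‖((h : ℝ) ^ 2 : ℂ) * lap u x‖ = h ^ 2 * ‖lap u x‖ := by
          rw [norm_mul, norm_pow, norm_real, Real.norm_of_nonneg hh.le]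
      _ ≤ ‖(h : ℂ) ^ 2 + I * h * a x‖ * ‖lap u x‖ := by gcongr
      _ = ‖u x + Ph h a u x + I * h * D‖ := by rw [← norm_mul, heq, norm_neg]
      _ ≤ ‖u x‖ + ‖Ph h a u x‖ + ‖I * h * D‖ := norm_add₃_le
      _ = _ := by simp [abs_of_pos hh]
  have hsq : ‖((h : ℝ) ^ 2 : ℂ) * lap u x‖ ^ 2 ≤
      3 * (‖u x‖ ^ 2 + ‖Ph h a u x‖ ^ 2 + h ^ 2 * ‖D‖ ^ 2) := by
    refine (pow_le_pow_left₀ (norm_nonneg _) hle 2).trans ?_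
    nlinarith [sq_nonneg (‖u x‖ - ‖Ph h a u x‖), sq_nonneg (‖u x‖ - h * ‖D‖),
      sq_nonneg (‖Ph h a u x‖ - h * ‖D‖)]
  calc a x * ‖((h : ℝ) ^ 2 : ℂ) * lap u x‖ ^ 2
      ≤ a x * (3 * (‖u x‖ ^ 2 + ‖Ph h a u x‖ ^ 2 + h ^ 2 * ‖D‖ ^ 2)) :=
        mul_le_mul_of_nonneg_left hsq (ha0 x)
    _ = 3 * (a x * ‖u x‖ ^ 2 + a x * ‖Ph h a u x‖ ^ 2 + a x * (h ^ 2 * ‖D‖ ^ 2)) := by ring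
    _ ≤ 3 * (a x * ‖u x‖ ^ 2 + M ^ 2 * ‖Ph h a u x‖ ^ 2
          + M ^ 2 * (h ^ 2 * (K ^ 2 * (a x * S)))) := by gcongr
    _ = _ := by ring

/-- The a priori estimate at fixed `h`, in terms of `ε = ‖P_h u‖ / h`. -/
theorem damped_estimate (ha : ContDiff ℝ 1 a) (ha0 : ∀ x, 0 ≤ a x)
    (haM : ∀ x, √(a x) ≤ M) (hK : 0 ≤ K) (haK : ∀ x, ‖gradient a x‖ ≤ K * √(a x))
    (hh : 0 < h) (hu : ContDiff ℝ 2 u) (hus : HasCompactSupport u)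
    (hnorm : ∫ x, ‖u x‖ ^ 2 = 1) {ε φ : ℝ} (hε : √(∫ x, ‖Ph h a u x‖ ^ 2) = h * ε)
    (hφ : φ = √(ε + K * √ε) + (K * M * √ε + M * ε)) :
    √(∫ x, a x * ‖u x‖ ^ 2) + √(∫ x, a x * ∑ i, ‖(h : ℂ) * pd i u x‖ ^ 2)
      + √(∫ x, a x * ‖((h : ℝ) ^ 2 : ℂ) * lap u x‖ ^ 2) ≤
      h * (φ + √ε + √(3 * (φ ^ 2 + M ^ 2 * ε ^ 2 + (K * M) ^ 2 * ε))) := by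
  have hM : 0 ≤ M := (Real.sqrt_nonneg _).trans (haM 0)
  have hε0 : 0 ≤ ε := nonneg_of_mul_nonneg_right (hε ▸ Real.sqrt_nonneg _) hh
  have hgrad := mul_integral_damped_gradient_le (h := h) ha hu hus hnorm
  have hmass := integral_damped_mass_le ha ha0 haM hK haK hh hu hus hnorm
  have hlap := integral_damped_lap_le ha ha0 haM haK hh hu hus
  have hFsq : ∫ x, ‖Ph h a u x‖ ^ 2 = (h * ε) ^ 2 := by
    rw [← hε, Real.sq_sqrt (integral_nonneg fun _ => sq_nonneg _)]
  have hscale : ∫ x, a x * ∑ i, ‖(h : ℂ) * pd i u x‖ ^ 2 =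
      h ^ 2 * ∫ x, a x * ∑ i, ‖pd i u x‖ ^ 2 := by
    rw [← integral_const_mul]
    refine integral_congr_ae (.of_forall fun x => ?_)
    simp only [norm_mul, mul_pow, ← Finset.mul_sum, norm_real, Real.norm_eq_abs, sq_abs]
    ring
  rw [hε] at hgrad hmass
  rw [hFsq] at hlap
  rw [hscale]
  set A := ∫ x, a x * ∑ i, ‖pd i u x‖ ^ 2
  have hX0 : 0 ≤ ∫ x, a x * ‖u x‖ ^ 2 :=
    integral_nonneg fun x => mul_nonneg (ha0 x) (sq_nonneg _)
  have hA : A ≤ ε := le_of_mul_le_mul_left hgrad hh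
  have hsA : √A ≤ √ε := Real.sqrt_le_sqrt hA
  set X := √(∫ x, a x * ‖u x‖ ^ 2) with hXdef
  rw [← Real.sq_sqrt hX0, ← hXdef] at hmass hlap
  have hXn : 0 ≤ X := Real.sqrt_nonneg _
  have hquad : X ^ 2 ≤ h ^ 2 * (ε + K * √ε) + h * (K * M * √ε + M * ε) * X := by
    calc X ^ 2 ≤ _ := hmass
      _ ≤ h ^ 2 * ε + h ^ 2 * K * √ε + h * K * M * (√ε * X) + M * (h * ε * X) := by gcongr
      _ = _ := by ring
  have hXφ : X ≤ h * φ := by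
    set p := ε + K * √ε with hp
    set q := K * M * √ε + M * ε with hq
    have hp0 : 0 ≤ p := by positivity
    have hq0 : 0 ≤ q := by positivity
    have hs := Real.sq_sqrt hp0
    by_contra! hlt
    rw [hφ, mul_add] at hlt
    have h1 : 0 ≤ h * √p := by positivity
    have h2 : 0 ≤ h * q := by positivity
    have h3 : (h * √p) ^ 2 = h ^ 2 * p := by rw [mul_pow, hs]
    nlinarith
  have hφ0 : 0 ≤ φ := nonneg_of_mul_nonneg_right (hXn.trans hXφ) hh
  have h2 : √(h ^ 2 * A) ≤ h * √ε := by
    rw [Real.sqrt_mul (sq_nonneg h), Real.sqrt_sq hh.le]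
    gcongr
  have h3 : √(∫ x, a x * ‖((h : ℝ) ^ 2 : ℂ) * lap u x‖ ^ 2) ≤
      h * √(3 * (φ ^ 2 + M ^ 2 * ε ^ 2 + (K * M) ^ 2 * ε)) := by
    have : h * √(3 * (φ ^ 2 + M ^ 2 * ε ^ 2 + (K * M) ^ 2 * ε)) =
        √(h ^ 2 * (3 * (φ ^ 2 + M ^ 2 * ε ^ 2 + (K * M) ^ 2 * ε))) := by
      rw [Real.sqrt_mul (sq_nonneg h), Real.sqrt_sq hh.le]
    rw [this]
    refine Real.sqrt_le_sqrt (hlap.trans ?_)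
    calc _ ≤ 3 * ((h * φ) ^ 2 + M ^ 2 * (h * ε) ^ 2 + (h * K * M) ^ 2 * ε) := by gcongr
      _ = _ := by ring
  linarith

end Helpers

/-- **Corollary 3.2 of the paper** (a priori estimate in the damped region): for a
contradiction sequence, `‖a^{1/2}u_n‖_{L²} + ‖a^{1/2}h_n∇u_n‖_{L²} +
‖a^{1/2}h_n²Δu_n‖_{L²} = o(h_n)`. -/
theorem stmt_6 (d : ℕ) (hd : 1 ≤ d)
    (a : EuclideanSpace ℝ (Fin d) → ℝ) (K : ℝ)
    (haC1 : ContDiff ℝ 1 a) (habd : ∃ C, ∀ x, a x ≤ C) (hapos : ∀ x, 0 ≤ a x)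
    (haK : ∀ x, ‖gradient a x‖ ≤ K * Real.sqrt (a x))
    (h : ℕ → ℝ) (u : ℕ → EuclideanSpace ℝ (Fin d) → ℂ)
    (hhpos : ∀ n, 0 < h n) (hh0 : Tendsto h atTop (nhds 0))
    (husm : ∀ n, ContDiff ℝ (⊤ : ℕ∞) (u n)) (husupp : ∀ n, HasCompactSupport (u n))
    (hunorm : ∀ n, (∫ x, ‖u n x‖ ^ 2) = 1)
    (hf : (fun n => Real.sqrt (∫ x, ‖Ph (h n) a (u n) x‖ ^ 2)) =o[atTop] h) :
    (fun n => Real.sqrt (∫ x, a x * ‖u n x‖ ^ 2)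
      + Real.sqrt (∫ x, a x * ∑ i : Fin d, ‖(h n : ℂ) * pd i (u n) x‖ ^ 2)
      + Real.sqrt (∫ x, a x * ‖((h n : ℝ) ^ 2 : ℂ) * lap (u n) x‖ ^ 2)) =o[atTop] h := by
  obtain ⟨C, hC⟩ := habd
  set ε : ℕ → ℝ := fun n => √(∫ x, ‖Ph (h n) a (u n) x‖ ^ 2) / h n
  set φ : ℝ → ℝ := fun t => √(t + |K| * √t) + (|K| * √C * √t + √C * t) with hφ
  set Φ : ℝ → ℝ := fun t => φ t + √t + √(3 * (φ t ^ 2 + √C ^ 2 * t ^ 2 + (|K| * √C) ^ 2 * t))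
    with hΦ
  have hε0 : Tendsto ε atTop (nhds 0) := hf.tendsto_div_nhds_zero
  have hΦc : Continuous Φ := by fun_prop
  have hΦ0 : Tendsto (fun n => Φ (ε n)) atTop (nhds 0) := by
    have hz : Φ 0 = 0 := by simp [hΦ, hφ]
    simpa only [hz, Function.comp_def] using (hΦc.tendsto 0).comp hε0
  have hsmall : (fun n => h n * Φ (ε n)) =o[atTop] h := by
    simpa using (isBigO_refl h atTop).mul_isLittleO ((isLittleO_one_iff ℝ).mpr hΦ0)
  refine IsBigO.trans_isLittleO (.of_norm_le fun n => ?_) hsmall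
  rw [Real.norm_of_nonneg (by positivity)]
  exact damped_estimate haC1 hapos (fun x => Real.sqrt_le_sqrt (hC x)) (abs_nonneg K)
    (fun x => (haK x).trans (mul_le_mul_of_nonneg_right (le_abs_self K) (Real.sqrt_nonneg _)))
    (hhpos n) (mod_cast contDiff_infty.mp (husm n) 2) (husupp n) (hunorm n)
    (mul_div_cancel₀ _ (hhpos n).ne').symm rfl

end
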